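/- For every integer n ≥ 2, the sum B_R(n) := Σ_{p ≤ √n} ((n−1)/(p−1))·d_p(n)·log p satisfies B_R(n) ≤ 4·n^{3/2}. -/

import Mathlib

/-!
Write `x = √n`. The digit sum satisfies `d_p(n) * log p ≤ (p - 1) * log (n + 1)`: equivalently
`p ^ d_p(n) ≤ (n + 1) ^ (p - 1)`, which follows by stripping off the last digit
(`pow_digits_sum_le`). Hence every summand is at most `(n - 1) * log (n + 1) ≤ n * log n`, and the
claim reduces to the weak Chebyshev bound `π(x) * log x ≤ 2 * x`.

For the latter, `π(x) * log x = θ(x) + ∑_{p ≤ x} log (x / p)`. Mathlib provides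
`θ(x) ≤ log 4 * x`. In the remaining sum, all primes but `2` are odd, and comparing the sum over
odd integers with `(1/2) ∫ log (x / t) dt` bounds it by roughly `x / 2`
(`sum_log_div_odd_primes_le`). Since `log 4 + 1/2 < 2`, the lower-order terms can be absorbed for
every `x ≥ 2`.
-/

/-- Bernoulli's inequality with exponent `c / (p - 1) ≤ 1`, raised to the power `p - 1`. -/
lemma pow_le_succ_pow (p c : ℕ) (hp : 2 ≤ p) (hc : c < p) : p ^ c ≤ (c + 1) ^ (p - 1) := by
  obtain ⟨q, rfl⟩ : ∃ q, p = q + 1 := ⟨p - 1, by omega⟩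
  have hq : (0 : ℝ) < q := by exact_mod_cast (by omega : 0 < q)
  have hcq : (c : ℝ) ≤ q := by exact_mod_cast (by omega : c ≤ q)
  have h := rpow_one_add_le_one_add_mul_self (s := (q : ℝ)) (p := (c : ℝ) / q)
    (by linarith) (by positivity) (by rw [div_le_one hq]; exact hcq)
  rw [div_mul_cancel₀ _ hq.ne'] at h
  have h2 := pow_le_pow_left₀ (by positivity) h q
  rw [← Real.rpow_natCast, ← Real.rpow_mul (by positivity), div_mul_cancel₀ _ hq.ne',
    Real.rpow_natCast] at h2
  simp only [Nat.add_sub_cancel]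
  have h3 : ((q : ℝ) + 1) ^ c ≤ ((c : ℝ) + 1) ^ q := by
    rw [add_comm (q : ℝ), add_comm (c : ℝ)]; exact h2
  exact_mod_cast h3

lemma pow_digits_sum_le (p : ℕ) (hp : 2 ≤ p) (n : ℕ) :
    p ^ (Nat.digits p n).sum ≤ (n + 1) ^ (p - 1) := by
  induction n using Nat.strong_induction_on with
  | _ n ih =>
    rcases Nat.eq_zero_or_pos n with rfl | hn
    · simp
    · rw [Nat.digits_def' (by omega) hn, List.sum_cons, pow_add]
      have hlt : n % p < p := Nat.mod_lt _ (by omega)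
      have h1 := pow_le_succ_pow p (n % p) hp hlt
      have h2 := ih (n / p) (Nat.div_lt_self hn (by omega))
      calc p ^ (n % p) * p ^ (Nat.digits p (n / p)).sum
          ≤ (n % p + 1) ^ (p - 1) * (n / p + 1) ^ (p - 1) := Nat.mul_le_mul h1 h2
        _ = ((n % p + 1) * (n / p + 1)) ^ (p - 1) := (mul_pow _ _ _).symm
        _ ≤ (n + 1) ^ (p - 1) := by
            apply Nat.pow_le_pow_left
            have h3 := Nat.mod_add_div n p
            have h4 : (n % p + 1) * (n / p) ≤ p * (n / p) := Nat.mul_le_mul_right _ hlt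
            nlinarith

lemma digits_sum_mul_log_le (p : ℕ) (hp : 2 ≤ p) (n : ℕ) :
    ((Nat.digits p n).sum : ℝ) * Real.log p ≤ ((p : ℝ) - 1) * Real.log ((n : ℝ) + 1) := by
  have h : (p : ℝ) ^ (Nat.digits p n).sum ≤ ((n : ℝ) + 1) ^ (p - 1) := by
    exact_mod_cast pow_digits_sum_le p hp n
  have hp0 : (0 : ℝ) < p := by exact_mod_cast (by omega : 0 < p)
  have h2 := Real.log_le_log (by positivity) h
  rw [Real.log_pow, Real.log_pow, Nat.cast_sub (by omega), Nat.cast_one] at h2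
  exact h2

/-- Comparison of the sum with `(1/2) ∫ log (x / t) dt` over `1 ≤ t ≤ 2 * k + 1`: the right-hand
side is `G (2 * k + 1) - G 1` for the antiderivative `G t = (t * log (x / t) + t) / 2`. -/
lemma sum_log_div_odd_primes_le (x : ℝ) (k : ℕ) (hk : 2 * (k : ℝ) + 1 ≤ x) :
    ∑ i ∈ Finset.range (2 * k + 2), (if i.Prime ∧ i ≠ 2 then Real.log (x / i) else 0) ≤
      ((2 * k + 1) * Real.log (x / (2 * k + 1)) + (2 * k + 1)) / 2 - (Real.log x + 1) / 2 := by
  induction k with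
  | zero => simp [Finset.sum_range_succ, Nat.not_prime_zero, Nat.not_prime_one]
  | succ k ih =>
    push_cast at hk ⊢
    have hk0 : (0 : ℝ) ≤ k := Nat.cast_nonneg k
    have ih := ih (by linarith)
    have heven : ¬ ((2 * k + 2).Prime ∧ 2 * k + 2 ≠ 2) := by
      rintro ⟨h, h2⟩
      exact h2 (((Nat.prime_dvd_prime_iff_eq Nat.prime_two h).1 ⟨k + 1, by ring⟩).symm)
    rw [show 2 * (k + 1) + 2 = (2 * k + 2) + 1 + 1 by ring, Finset.sum_range_succ,
      Finset.sum_range_succ, if_neg heven]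
    have hx : 0 < x := by linarith
    have hlog : 0 ≤ Real.log (x / (2 * k + 3)) :=
      Real.log_nonneg (by rw [le_div_iff₀ (by positivity)]; linarith)
    have hite : (if (2 * k + 2 + 1).Prime ∧ 2 * k + 2 + 1 ≠ 2 then
        Real.log (x / ((2 * k + 2 + 1 : ℕ) : ℝ)) else 0) ≤ Real.log (x / (2 * k + 3)) := by
      split_ifs
      · apply le_of_eq; push_cast; ring_nf
      · exact hlog
    have ht := Real.log_le_sub_one_of_pos (x := (2 * (k : ℝ) + 3) / (2 * k + 1)) (by positivity)
    have ht2 : (2 * (k : ℝ) + 1) * Real.log ((2 * (k : ℝ) + 3) / (2 * k + 1)) ≤ 2 := by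
      calc _ ≤ (2 * (k : ℝ) + 1) * ((2 * (k : ℝ) + 3) / (2 * k + 1) - 1) := by gcongr
        _ = 2 := by field_simp; ring
    rw [Real.log_div (by positivity) (by positivity)] at ht2
    rw [show 2 * ((k : ℝ) + 1) + 1 = 2 * k + 3 by ring]
    have hd1 : Real.log (x / (2 * (k : ℝ) + 1)) = Real.log x - Real.log (2 * (k : ℝ) + 1) :=
      Real.log_div hx.ne' (by positivity)
    have hd3 : Real.log (x / (2 * (k : ℝ) + 3)) = Real.log x - Real.log (2 * (k : ℝ) + 3) :=
      Real.log_div hx.ne' (by positivity)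
    rw [hd1] at ih
    rw [hd3] at hite ⊢
    linarith

lemma card_primes_mul_log_le (x : ℝ) (hx : 2 ≤ x) :
    (((Finset.Ioc 0 ⌊x⌋₊).filter Nat.Prime).card : ℝ) * Real.log x ≤ 2 * x := by
  have hx0 : 0 < x := by linarith
  have hM : 2 ≤ ⌊x⌋₊ := Nat.le_floor (by exact_mod_cast hx)
  have hMx : (⌊x⌋₊ : ℝ) ≤ x := Nat.floor_le hx0.le
  have htheta := Chebyshev.theta_le_log4_mul_x hx0.le
  rw [Chebyshev.theta] at htheta
  have hsplit : (((Finset.Ioc 0 ⌊x⌋₊).filter Nat.Prime).card : ℝ) * Real.log x =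
      ∑ p ∈ (Finset.Ioc 0 ⌊x⌋₊).filter Nat.Prime, Real.log p +
      ∑ p ∈ (Finset.Ioc 0 ⌊x⌋₊).filter Nat.Prime, Real.log (x / p) := by
    rw [← Finset.sum_add_distrib, ← nsmul_eq_mul, ← Finset.sum_const]
    refine Finset.sum_congr rfl fun p hp => ?_
    have hp0 : (p : ℝ) ≠ 0 := by exact_mod_cast (Finset.mem_filter.1 hp).2.ne_zero
    rw [Real.log_div hx0.ne' hp0]; ring
  -- Truncate at the largest odd integer `2 * k + 1 ≤ x`; the only possible prime lost is `2`.
  obtain ⟨k, hk⟩ : ∃ k, ⌊x⌋₊ = 2 * k + 1 ∨ ⌊x⌋₊ = 2 * k + 2 :=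
    ⟨(⌊x⌋₊ - 1) / 2, by omega⟩
  have hkx : 2 * (k : ℝ) + 1 ≤ x := by
    refine le_trans ?_ hMx
    exact_mod_cast (by omega : 2 * k + 1 ≤ ⌊x⌋₊)
  have hodd := sum_log_div_odd_primes_le x k hkx
  have hsub : ∑ p ∈ (Finset.Ioc 0 ⌊x⌋₊).filter Nat.Prime, Real.log (x / p) =
      Real.log (x / 2) +
      ∑ i ∈ Finset.range (2 * k + 2), (if i.Prime ∧ i ≠ 2 then Real.log (x / i) else 0) := by
    have h2 : 2 ∈ (Finset.Ioc 0 ⌊x⌋₊).filter Nat.Prime := by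
      simp [Nat.prime_two, hM]
    rw [← Finset.add_sum_erase _ _ h2, ← Finset.sum_filter]
    congr 1
    refine Finset.sum_congr ?_ fun _ _ => rfl
    ext p
    simp only [Finset.mem_erase, Finset.mem_filter, Finset.mem_Ioc, Finset.mem_range]
    constructor
    · rintro ⟨h1, ⟨h3, h4⟩, h5⟩
      refine ⟨?_, h5, h1⟩
      have := h5.eq_two_or_odd
      omega
    · rintro ⟨h1, h3, h4⟩
      exact ⟨h4, ⟨h3.pos, by omega⟩, h3⟩
  have hG : (2 * (k : ℝ) + 1) * Real.log (x / (2 * k + 1)) + (2 * k + 1) ≤ x := by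
    have h := Real.log_le_sub_one_of_pos (x := x / (2 * (k : ℝ) + 1)) (by positivity)
    calc _ ≤ (2 * (k : ℝ) + 1) * (x / (2 * k + 1) - 1) + (2 * k + 1) := by gcongr
      _ = x := by field_simp; ring
  have hl4 : Real.log 4 = 2 * Real.log 2 := by
    rw [show (4 : ℝ) = 2 ^ 2 by norm_num, Real.log_pow]; norm_num
  -- Tangent line to `log` at `8`: its slope `1/8` is small enough for the available slack.
  have h8 := Real.log_le_sub_one_of_pos (x := x / 8) (by positivity)
  have hl8 : Real.log 8 = 3 * Real.log 2 := by
    rw [show (8 : ℝ) = 2 ^ 3 by norm_num, Real.log_pow]; norm_num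
  rw [Real.log_div hx0.ne' (by norm_num), hl8] at h8
  rw [Real.log_div hx0.ne' (by norm_num)] at hsub
  rw [hl4] at htheta
  have hlog2 := Real.log_two_lt_d9
  have hlx : Real.log 2 * x ≤ 0.6931471808 * x := by gcongr
  linarith

theorem B_R_bound (n : ℕ) (hn : 2 ≤ n) :
    ∑ p ∈ (Finset.range (n + 1)).filter (fun p : ℕ => p.Prime ∧ (p : ℝ) ≤ Real.sqrt n),
        ((n : ℝ) - 1) / ((p : ℝ) - 1) * ((Nat.digits p n).sum : ℝ) * Real.log p ≤
      4 * (n : ℝ) ^ ((3 : ℝ) / 2) := by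
  have hn2 : (2 : ℝ) ≤ n := by exact_mod_cast hn
  have hn0 : (0 : ℝ) < n := by linarith
  by_cases hx : Real.sqrt n < 2
  · rw [Finset.sum_eq_zero]
    · positivity
    · intro p hp
      obtain ⟨-, hp, hpx⟩ := Finset.mem_filter.1 hp
      have : (2 : ℝ) ≤ p := by exact_mod_cast hp.two_le
      linarith
  push Not at hx
  have hsq : Real.sqrt n * Real.sqrt n = n := Real.mul_self_sqrt hn0.le
  have hn4 : (4 : ℝ) ≤ n := by nlinarith
  have hlogn : Real.log n = 2 * Real.log (Real.sqrt n) := by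
    rw [Real.log_sqrt hn0.le]; ring
  have hlogn1 : 1 ≤ Real.log n := by
    rw [Real.le_log_iff_exp_le hn0]
    linarith [Real.exp_one_lt_d9]
  have hmain : ((n : ℝ) - 1) * Real.log ((n : ℝ) + 1) ≤ n * Real.log n := by
    have h := Real.log_le_sub_one_of_pos (x := ((n : ℝ) + 1) / n) (by positivity)
    rw [Real.log_div (by positivity) hn0.ne'] at h
    have h' : ((n : ℝ) + 1) / n - 1 = 1 / n := by field_simp; ring
    rw [h'] at h
    have h2 : ((n : ℝ) - 1) * (1 / n) ≤ 1 := by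
      rw [mul_one_div, div_le_one hn0]; linarith
    have h3 := mul_le_mul_of_nonneg_left h (by linarith : (0 : ℝ) ≤ (n : ℝ) - 1)
    linarith
  have hset : (Finset.range (n + 1)).filter (fun p : ℕ => p.Prime ∧ (p : ℝ) ≤ Real.sqrt n) =
      (Finset.Ioc 0 ⌊Real.sqrt n⌋₊).filter Nat.Prime := by
    ext p
    simp only [Finset.mem_filter, Finset.mem_range, Finset.mem_Ioc]
    constructor
    · rintro ⟨-, hp, hpx⟩
      exact ⟨⟨hp.pos, Nat.le_floor hpx⟩, hp⟩
    · rintro ⟨⟨-, hpx⟩, hp⟩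
      have hpx' : (p : ℝ) ≤ Real.sqrt n := (Nat.le_floor_iff (by positivity)).1 hpx
      have : (p : ℝ) ≤ n := by nlinarith
      exact ⟨Nat.lt_succ_of_le (by exact_mod_cast this), hp, hpx'⟩
  have hterm : ∀ p ∈ (Finset.Ioc 0 ⌊Real.sqrt n⌋₊).filter Nat.Prime,
      ((n : ℝ) - 1) / ((p : ℝ) - 1) * ((Nat.digits p n).sum : ℝ) * Real.log p ≤
        n * Real.log n := by
    intro p hp
    have hp2 := (Finset.mem_filter.1 hp).2.two_le
    have hp2' : (2 : ℝ) ≤ p := by exact_mod_cast hp2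
    have hp1 : (0 : ℝ) < (p : ℝ) - 1 := by linarith
    refine le_trans ?_ hmain
    rw [mul_assoc]
    calc _ ≤ ((n : ℝ) - 1) / ((p : ℝ) - 1) * (((p : ℝ) - 1) * Real.log ((n : ℝ) + 1)) :=
          mul_le_mul_of_nonneg_left (digits_sum_mul_log_le p hp2 n)
            (div_nonneg (by linarith) hp1.le)
      _ = _ := by field_simp
  have hpow : (n : ℝ) ^ ((3 : ℝ) / 2) = n * Real.sqrt n := by
    rw [show (3 : ℝ) / 2 = 1 + 1 / 2 by norm_num, Real.rpow_add hn0, Real.rpow_one,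
      Real.sqrt_eq_rpow]
  rw [hset, hpow]
  have hpi := card_primes_mul_log_le (Real.sqrt n) hx
  have hsum := Finset.sum_le_card_nsmul _ _ _ hterm
  rw [nsmul_eq_mul, hlogn] at hsum
  have := mul_le_mul_of_nonneg_left hpi hn0.le
  linarith
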